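/- Let k ≥ 2, let 1 ≤ s < k, and let Θ̂ be a k×k real symmetric positive definite matrix with λ_{k−s}(Θ̂) > λ_{k−s+1}(Θ̂), and let Θ̂ = Σ_{ℓ=1}^{k} λ_ℓ(Θ̂)·u_ℓ·u_ℓᵀ be a spectral decomposition with orthonormal eigenvectors u_1, …, u_k. Then for every k×k real symmetric matrix H, the real function t ↦ −Σ_{ℓ=k−s+1}^{k} log λ_ℓ(Θ̂ + t·H) is differentiable at t = 0 with derivative −Σ_{ℓ=k−s+1}^{k} (u_ℓᵀ·H·u_ℓ)/λ_ℓ(Θ̂); that is, the gradient of Θ ↦ −Σ_{ℓ=k−s+1}^{k} log λ_ℓ(Θ) at Θ̂ is −Σ_{ℓ=k−s+1}^{k} λ_ℓ(Θ̂)⁻¹·u_ℓ·u_ℓᵀ. -/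

import Mathlib

open Matrix

/-- The eigenvalues of a real symmetric matrix, sorted in nonincreasing order:
`sortedEigs M 0` is the largest eigenvalue (`λ_1`) and `sortedEigs M (k-1)` the
smallest (`λ_k`).  For non-Hermitian matrices we return the junk value `0`. -/
noncomputable def sortedEigs {k : ℕ} (M : Matrix (Fin k) (Fin k) ℝ) : Fin k → ℝ :=
  if h : M.IsHermitian then fun i => (h.eigenvalues ∘ Tuple.sort h.eigenvalues) i.rev
  else fun _ => 0

/-!
Let `v`, `u` be orthonormal eigenbases of self-adjoint operators `A`, `B`, with eigenvalues `μ`,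
`ν`. Then `(μ j - ν i) * ⟪v j, u i⟫ = ⟪v j, (A - B) (u i)⟫`, and the squared overlaps
`‖⟪v j, u i⟫‖ ^ 2` are doubly stochastic. Hence averaging the remainders
`φ j (μ j) - φ i (ν i) - φ i' (ν i) * (μ j - ν i)` against the overlaps gives exactly the remainder
`∑ φ j (μ j) - ∑ φ i (ν i) - ∑ φ i' (ν i) * ⟪u i, (A - B) (u i)⟫`. As `A → B`, a pair with
`ν j = ν i` contributes a scalar Taylor remainder, which is `o(‖A - B‖)` by Weyl's inequality
`|μ j - ν j| ≤ ‖A - B‖`; a pair with `ν j ≠ ν i` has overlap `O(‖A - B‖)`, so it contributes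
`O(‖A - B‖ ^ 2)`. The eigenvectors `v` need not depend continuously on `A`.
-/

section Eigenbasis

open Filter Asymptotics RCLike
open scoped Topology InnerProductSpace

variable {𝕜 E ι κ α : Type*} [RCLike 𝕜] [NormedAddCommGroup E] [InnerProductSpace 𝕜 E]
  [Fintype ι] [Fintype κ]

/-- `IsEigenbasis A v μ` says that the orthonormal basis `v` diagonalises the operator `A`, with
eigenvalue `μ i` at `v i`. The eigenvalues are real even over `ℂ`, which makes `A` self-adjoint. -/
def IsEigenbasis (A : E →L[𝕜] E) (v : OrthonormalBasis ι 𝕜 E) (μ : ι → ℝ) : Prop :=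
  ∀ i, A (v i) = (μ i : 𝕜) • v i

namespace IsEigenbasis

variable {A B : E →L[𝕜] E} {v : OrthonormalBasis ι 𝕜 E} {u : OrthonormalBasis κ 𝕜 E}
  {μ : ι → ℝ} {ν : κ → ℝ}

theorem inner_apply (hA : IsEigenbasis A v μ) (i : ι) (x : E) :
    ⟪v i, A x⟫_𝕜 = μ i * ⟪v i, x⟫_𝕜 := by
  classical
  conv_lhs => rw [← v.sum_repr' x]
  simp [hA _, inner_sum, inner_smul_right, v.inner_eq_ite, mul_comm]

theorem re_inner_apply_self (hA : IsEigenbasis A v μ) (x : E) :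
    re ⟪x, A x⟫_𝕜 = ∑ i, μ i * ‖⟪v i, x⟫_𝕜‖ ^ 2 := by
  rw [← v.sum_inner_mul_inner, map_sum]
  refine Finset.sum_congr rfl fun i _ => ?_
  rw [hA.inner_apply, mul_left_comm, re_ofReal_mul, inner_mul_symm_re_eq_norm, norm_mul,
    norm_inner_symm, sq]

theorem sub_mul_inner (hA : IsEigenbasis A v μ) (hB : IsEigenbasis B u ν) (j : ι) (i : κ) :
    ((μ j - ν i : ℝ) : 𝕜) * ⟪v j, u i⟫_𝕜 = ⟪v j, (A - B) (u i)⟫_𝕜 := by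
  rw [_root_.sub_apply, inner_sub_right, hA.inner_apply, hB i, inner_smul_right,
    ofReal_sub, sub_mul]

theorem sum_sq_norm_inner_mul_sub (hA : IsEigenbasis A v μ) (hB : IsEigenbasis B u ν) (i : κ) :
    ∑ j, ‖⟪v j, u i⟫_𝕜‖ ^ 2 * (μ j - ν i) = re ⟪u i, (A - B) (u i)⟫_𝕜 := by
  rw [← v.sum_inner_mul_inner, map_sum]
  refine Finset.sum_congr rfl fun j _ => ?_
  rw [← hA.sub_mul_inner hB, mul_left_comm, re_ofReal_mul, inner_mul_symm_re_eq_norm, norm_mul,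
    norm_inner_symm, ← sq, mul_comm]

theorem sum_sub_sum_sub_sum_re_inner_eq (hA : IsEigenbasis A v μ) (hB : IsEigenbasis B u ν)
    (f : ι → ℝ) (g c : κ → ℝ) :
    ∑ j, f j - ∑ i, g i - ∑ i, c i * re ⟪u i, (A - B) (u i)⟫_𝕜 =
      ∑ j, ∑ i, ‖⟪v j, u i⟫_𝕜‖ ^ 2 * (f j - g i - c i * (μ j - ν i)) := by
  have hf : ∑ j, ∑ i, ‖⟪v j, u i⟫_𝕜‖ ^ 2 * f j = ∑ j, f j := by
    simp [← Finset.sum_mul, u.sum_sq_norm_inner_left]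
  have hg : ∑ j, ∑ i, ‖⟪v j, u i⟫_𝕜‖ ^ 2 * g i = ∑ i, g i := by
    rw [Finset.sum_comm]
    simp [← Finset.sum_mul, v.sum_sq_norm_inner_right]
  have hc : ∑ j, ∑ i, ‖⟪v j, u i⟫_𝕜‖ ^ 2 * (c i * (μ j - ν i)) =
      ∑ i, c i * re ⟪u i, (A - B) (u i)⟫_𝕜 := by
    rw [Finset.sum_comm]
    simp only [mul_left_comm _ (c _), ← Finset.mul_sum, hA.sum_sq_norm_inner_mul_sub hB]
  simp only [← hf, ← hg, ← hc, mul_sub, Finset.sum_sub_distrib]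

theorem abs_sub_mul_norm_inner_le (hA : IsEigenbasis A v μ) (hB : IsEigenbasis B u ν)
    (j : ι) (i : κ) : |μ j - ν i| * ‖⟪v j, u i⟫_𝕜‖ ≤ ‖A - B‖ := by
  calc |μ j - ν i| * ‖⟪v j, u i⟫_𝕜‖ = ‖⟪v j, (A - B) (u i)⟫_𝕜‖ := by
        rw [← hA.sub_mul_inner hB, norm_mul, norm_ofReal]
    _ ≤ ‖v j‖ * ‖(A - B) (u i)‖ := norm_inner_le_norm _ _
    _ ≤ ‖A - B‖ := by simpa using (A - B).le_opNorm (u i)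

theorem isBigO_inner_of_eigenvalue_ne {l : Filter α} {A : α → E →L[𝕜] E}
    {v : α → OrthonormalBasis ι 𝕜 E} {μ : α → ι → ℝ} (hA : ∀ a, IsEigenbasis (A a) (v a) (μ a))
    (hB : IsEigenbasis B u ν) {j : ι} {i : κ} {c : ℝ} (hj : Tendsto (μ · j) l (𝓝 c))
    (hc : c ≠ ν i) :
    (fun a => ⟪v a j, u i⟫_𝕜) =O[l] fun a => A a - B := by
  have hgap : Tendsto (fun a => |μ a j - ν i|) l (𝓝 |c - ν i|) := (hj.sub_const _).abs
  have hpos : 0 < |c - ν i| := abs_pos.mpr (sub_ne_zero.mpr hc)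
  refine .of_bound (|c - ν i| / 2)⁻¹ ?_
  filter_upwards [hgap.eventually_const_le (half_lt_self hpos)] with a ha
  rw [le_inv_mul_iff₀ (half_pos hpos)]
  exact (mul_le_mul_of_nonneg_right ha (norm_nonneg _)).trans
    ((hA a).abs_sub_mul_norm_inner_le hB j i)

end IsEigenbasis

variable [LinearOrder ι]

-- `x` is only asked to be orthogonal to `card ι - 1` vectors: index `m` imposes no condition.
theorem exists_ne_zero_inner_eq_zero_of_gt_of_lt
    (hcard : Module.finrank 𝕜 E = Fintype.card ι) (v u : ι → E) (m : ι) :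
    ∃ x : E, x ≠ 0 ∧ (∀ j, m < j → ⟪v j, x⟫_𝕜 = 0) ∧ ∀ i, i < m → ⟪u i, x⟫_𝕜 = 0 := by
  have : FiniteDimensional 𝕜 E :=
    .of_finrank_pos (hcard ▸ Fintype.card_pos_iff.mpr ⟨m⟩)
  let w : ι → E := fun i => if m < i then v i else u i
  let L : E →ₗ[𝕜] {i // i ≠ m} → 𝕜 := LinearMap.pi fun i => innerₛₗ 𝕜 (w i)
  have hker : L.ker ≠ ⊥ := by
    refine L.ker_ne_bot_of_finrank_lt ?_
    rw [Module.finrank_fintype_fun_eq_card, hcard]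
    exact Fintype.card_subtype_lt (not_not.mpr rfl : ¬ m ≠ m)
  obtain ⟨x, hx, hx0⟩ := L.ker.exists_mem_ne_zero_of_ne_bot hker
  have hw : ∀ i ≠ m, ⟪w i, x⟫_𝕜 = 0 := fun i hi => congrFun hx ⟨i, hi⟩
  refine ⟨x, hx0, fun j hj => ?_, fun i hi => ?_⟩
  · simpa [w, hj] using hw j hj.ne'
  · simpa [w, hi.not_gt] using hw i hi.ne

namespace IsEigenbasis

section Weyl

variable {A B : E →L[𝕜] E} {v u : OrthonormalBasis ι 𝕜 E} {μ ν : ι → ℝ}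

theorem mul_sq_norm_le_re_inner (hA : IsEigenbasis A v μ) (hμ : Antitone μ) {m : ι} {x : E}
    (hx : ∀ j, m < j → ⟪v j, x⟫_𝕜 = 0) : μ m * ‖x‖ ^ 2 ≤ re ⟪x, A x⟫_𝕜 := by
  rw [hA.re_inner_apply_self, ← v.sum_sq_norm_inner_right, Finset.mul_sum]
  refine Finset.sum_le_sum fun j _ => ?_
  obtain hj | hj := le_or_gt j m
  · have := hμ hj
    gcongr
  · simp [hx j hj]

theorem re_inner_le_mul_sq_norm (hA : IsEigenbasis A v μ) (hμ : Antitone μ) {m : ι} {x : E}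
    (hx : ∀ j, j < m → ⟪v j, x⟫_𝕜 = 0) : re ⟪x, A x⟫_𝕜 ≤ μ m * ‖x‖ ^ 2 := by
  rw [hA.re_inner_apply_self, ← v.sum_sq_norm_inner_right, Finset.mul_sum]
  refine Finset.sum_le_sum fun j _ => ?_
  obtain hj | hj := le_or_gt m j
  · have := hμ hj
    gcongr
  · simp [hx j hj]

theorem eigenvalue_sub_le_norm_sub (hA : IsEigenbasis A v μ) (hB : IsEigenbasis B u ν)
    (hμ : Antitone μ) (hν : Antitone ν) (m : ι) : μ m - ν m ≤ ‖A - B‖ := by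
  obtain ⟨x, hx0, hvx, hux⟩ :=
    exists_ne_zero_inner_eq_zero_of_gt_of_lt (Module.finrank_eq_card_basis v.toBasis) v u m
  have hx : 0 < ‖x‖ ^ 2 := by positivity
  refine le_of_mul_le_mul_right ?_ hx
  calc (μ m - ν m) * ‖x‖ ^ 2 ≤ re ⟪x, A x⟫_𝕜 - re ⟪x, B x⟫_𝕜 := by
        rw [sub_mul]
        exact sub_le_sub (hA.mul_sq_norm_le_re_inner hμ hvx) (hB.re_inner_le_mul_sq_norm hν hux)
    _ = re ⟪x, (A - B) x⟫_𝕜 := by simp [inner_sub_right]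
    _ ≤ ‖x‖ * ‖(A - B) x‖ := re_inner_le_norm _ _
    _ ≤ ‖x‖ * (‖A - B‖ * ‖x‖) := by gcongr; exact (A - B).le_opNorm x
    _ = ‖A - B‖ * ‖x‖ ^ 2 := by ring

theorem abs_eigenvalue_sub_le_norm_sub (hA : IsEigenbasis A v μ) (hB : IsEigenbasis B u ν)
    (hμ : Antitone μ) (hν : Antitone ν) (m : ι) : |μ m - ν m| ≤ ‖A - B‖ :=
  abs_sub_le_iff.mpr ⟨hA.eigenvalue_sub_le_norm_sub hB hμ hν m,
    norm_sub_rev A B ▸ hB.eigenvalue_sub_le_norm_sub hA hν hμ m⟩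

end Weyl

section Perturbation

variable {l : Filter α} {A : α → E →L[𝕜] E} {B : E →L[𝕜] E} {v : α → OrthonormalBasis ι 𝕜 E}
  {u : OrthonormalBasis ι 𝕜 E} {μ : α → ι → ℝ} {ν : ι → ℝ} {φ : ι → ℝ → ℝ}

theorem isBigO_eigenvalue_sub (hA : ∀ a, IsEigenbasis (A a) (v a) (μ a)) (hB : IsEigenbasis B u ν)
    (hμ : ∀ a, Antitone (μ a)) (hν : Antitone ν) (i : ι) :
    (fun a => μ a i - ν i) =O[l] fun a => A a - B :=
  .of_bound' <| .of_forall fun a => (hA a).abs_eigenvalue_sub_le_norm_sub hB (hμ a) hν i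

theorem tendsto_eigenvalue (hA : ∀ a, IsEigenbasis (A a) (v a) (μ a)) (hB : IsEigenbasis B u ν)
    (hμ : ∀ a, Antitone (μ a)) (hν : Antitone ν) (hAB : Tendsto A l (𝓝 B)) (i : ι) :
    Tendsto (μ · i) l (𝓝 (ν i)) := by
  have h0 : Tendsto (fun a => A a - B) l (𝓝 0) := by simpa using hAB.sub_const B
  exact tendsto_sub_nhds_zero_iff.mp ((isBigO_eigenvalue_sub hA hB hμ hν i).trans_tendsto h0)

theorem isLittleO_sq_norm_inner_mul_remainder (hA : ∀ a, IsEigenbasis (A a) (v a) (μ a))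
    (hB : IsEigenbasis B u ν) (hμ : ∀ a, Antitone (μ a)) (hν : Antitone ν)
    (hAB : Tendsto A l (𝓝 B)) {j i : ι} (hφ : DifferentiableAt ℝ (φ j) (ν j))
    (hφν : ν j = ν i → φ j = φ i) :
    (fun a => ‖⟪v a j, u i⟫_𝕜‖ ^ 2 *
      (φ j (μ a j) - φ i (ν i) - deriv (φ i) (ν i) * (μ a j - ν i))) =o[l] fun a => A a - B := by
  have hj : Tendsto (μ · j) l (𝓝 (ν j)) := tendsto_eigenvalue hA hB hμ hν hAB j
  obtain hij | hij := eq_or_ne (ν j) (ν i)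
  · have hoverlap : (fun a => ‖⟪v a j, u i⟫_𝕜‖ ^ 2) =O[l] fun _ => (1 : ℝ) := by
      refine .of_bound 1 <| .of_forall fun a => ?_
      have := norm_inner_le_norm (𝕜 := 𝕜) (v a j) (u i)
      simpa [sq_le_one_iff_abs_le_one] using this
    have htaylor : (fun a => φ j (μ a j) - φ i (ν i) - deriv (φ i) (ν i) * (μ a j - ν i)) =o[l]
        fun a => A a - B := by
      rw [← hij, ← hφν hij]
      refine IsLittleO.trans_isBigO ?_ (isBigO_eigenvalue_sub hA hB hμ hν j)
      simpa [Function.comp_def, mul_comm] using hφ.hasDerivAt.isLittleO.comp_tendsto hj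
    simpa using hoverlap.mul_isLittleO htaylor.norm_right
  · have hoverlap : (fun a => ‖⟪v a j, u i⟫_𝕜‖ ^ 2) =O[l] fun a => ‖A a - B‖ ^ 2 :=
      (isBigO_inner_of_eigenvalue_ne hA hB hj hij).norm_norm.pow 2
    have hremainder : (fun a => φ j (μ a j) - φ i (ν i) - deriv (φ i) (ν i) * (μ a j - ν i)) =O[l]
        fun _ => (1 : ℝ) :=
      (((hφ.continuousAt.tendsto.comp hj).sub_const _).sub
        ((hj.sub_const _).const_mul _)).isBigO_one ℝ
    have hsq : (fun a => ‖A a - B‖ ^ 2) =o[l] fun a => A a - B := by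
      have h0 : Tendsto (fun a => A a - B) l (𝓝 0) := by simpa using hAB.sub_const B
      exact (isLittleO_norm_pow_id one_lt_two).comp_tendsto h0
    simpa using (hoverlap.mul hremainder).trans_isLittleO (by simpa using hsq)

theorem isLittleO_sum_apply_eigenvalue (hA : ∀ a, IsEigenbasis (A a) (v a) (μ a))
    (hB : IsEigenbasis B u ν) (hμ : ∀ a, Antitone (μ a)) (hν : Antitone ν)
    (hAB : Tendsto A l (𝓝 B)) (hφ : ∀ i, DifferentiableAt ℝ (φ i) (ν i))
    (hφν : ∀ i j, ν i = ν j → φ i = φ j) :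
    (fun a => ∑ i, φ i (μ a i) - ∑ i, φ i (ν i) -
      ∑ i, deriv (φ i) (ν i) * re ⟪u i, (A a - B) (u i)⟫_𝕜) =o[l] fun a => A a - B := by
  simp only [fun a => (hA a).sum_sub_sum_sub_sum_re_inner_eq hB]
  exact .fun_sum fun j _ => .fun_sum fun i _ =>
    isLittleO_sq_norm_inner_mul_remainder hA hB hμ hν hAB (hφ j) (hφν j i)

theorem hasDerivAt_sum_apply_eigenvalue {B H : E →L[𝕜] E} {v : ℝ → OrthonormalBasis ι 𝕜 E}
    {μ : ℝ → ι → ℝ} (hA : ∀ t : ℝ, IsEigenbasis (B + (t : 𝕜) • H) (v t) (μ t))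
    (hμ : ∀ t, Antitone (μ t)) (hB : IsEigenbasis B u (μ 0))
    (hφ : ∀ i, DifferentiableAt ℝ (φ i) (μ 0 i)) (hφν : ∀ i j, μ 0 i = μ 0 j → φ i = φ j) :
    HasDerivAt (fun t => ∑ i, φ i (μ t i))
      (∑ i, deriv (φ i) (μ 0 i) * re ⟪u i, H (u i)⟫_𝕜) 0 := by
  have hline : Tendsto (fun t : ℝ => B + (t : 𝕜) • H) (𝓝 0) (𝓝 B) := by
    have : Continuous fun t : ℝ => B + (t : 𝕜) • H := by fun_prop
    simpa using this.tendsto 0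
  have hsub : (fun t : ℝ => B + (t : 𝕜) • H - B) =O[𝓝 0] fun t : ℝ => t - 0 := by
    refine .of_bound ‖H‖ <| .of_forall fun t => ?_
    simp [norm_smul, mul_comm]
  rw [hasDerivAt_iff_isLittleO]
  refine ((isLittleO_sum_apply_eigenvalue hA hB hμ (hμ 0) hline hφ hφν).trans_isBigO
    hsub).congr_left fun t => ?_
  simp [inner_smul_right, Finset.mul_sum, mul_left_comm]

end Perturbation

end IsEigenbasis

end Eigenbasis

section SortedEigs

variable {k : ℕ} {M : Matrix (Fin k) (Fin k) ℝ}

theorem sortedEigs_of_isHermitian (hM : M.IsHermitian) (i : Fin k) :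
    sortedEigs M i = hM.eigenvalues (Tuple.sort hM.eigenvalues i.rev) := by
  simp only [sortedEigs, dif_pos hM, Function.comp_apply]

theorem antitone_sortedEigs (M : Matrix (Fin k) (Fin k) ℝ) : Antitone (sortedEigs M) := by
  unfold sortedEigs
  split_ifs with hM
  · exact fun i j hij => Tuple.monotone_sort hM.eigenvalues (Fin.rev_le_rev.mpr hij)
  · exact antitone_const

theorem sortedEigs_pos (hM : M.PosDef) (i : Fin k) : 0 < sortedEigs M i :=
  sortedEigs_of_isHermitian hM.isHermitian i ▸ hM.eigenvalues_pos _

theorem exists_isEigenbasis_sortedEigs (hM : M.IsHermitian) :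
    ∃ v : OrthonormalBasis (Fin k) ℝ (EuclideanSpace ℝ (Fin k)),
      IsEigenbasis (toEuclideanCLM (𝕜 := ℝ) M) v (sortedEigs M) := by
  let σ : Fin k ≃ Fin k := Fin.revPerm.trans (Tuple.sort hM.eigenvalues)
  refine ⟨hM.eigenvectorBasis.reindex σ.symm, fun i => WithLp.ofLp_injective 2 ?_⟩
  simpa [sortedEigs_of_isHermitian hM, σ] using hM.mulVec_eigenvectorBasis (σ i)

end SortedEigs

section SpectralDecomposition

variable {R ι n : Type*} [Fintype ι]

theorem isSymm_sum_smul_vecMulVec [CommSemiring R] (c : ι → R) (u : ι → n → R) :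
    (∑ i, c i • vecMulVec (u i) (u i)).IsSymm := by
  ext a b
  simp [Matrix.sum_apply, vecMulVec_apply, mul_comm]

theorem sum_smul_vecMulVec_mulVec [CommSemiring R] [Fintype n] [DecidableEq ι] {u : ι → n → R}
    (hu : ∀ i j, u i ⬝ᵥ u j = if i = j then 1 else 0) (c : ι → R) (j : ι) :
    (∑ i, c i • vecMulVec (u i) (u i)) *ᵥ u j = c j • u j := by
  simp [sum_mulVec, smul_mulVec, vecMulVec_mulVec, hu]

theorem exists_orthonormalBasis_of_dotProduct_eq_ite [DecidableEq ι] {u : ι → ι → ℝ}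
    (hu : ∀ i j, u i ⬝ᵥ u j = if i = j then 1 else 0) :
    ∃ b : OrthonormalBasis ι ℝ (EuclideanSpace ℝ ι), ∀ i, b i = WithLp.toLp 2 (u i) := by
  have hon : Orthonormal ℝ fun i => WithLp.toLp 2 (u i) := by
    rw [orthonormal_iff_ite]
    intro i j
    simpa [EuclideanSpace.inner_toLp_toLp, dotProduct_comm] using hu i j
  obtain ⟨b, hb⟩ := Orthonormal.exists_orthonormalBasis_extension_of_card_eq (𝕜 := ℝ)
    (s := Set.univ) (v := fun i => WithLp.toLp 2 (u i)) finrank_euclideanSpace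
    (hon.comp _ Subtype.val_injective)
  exact ⟨b, fun i => hb i (Set.mem_univ i)⟩

end SpectralDecomposition

theorem le_iff_le_of_antitone_of_covBy {ι β : Type*} [LinearOrder ι] [Preorder β] {f : ι → β}
    (hf : Antitone f) {a b : ι} (hab : a ⋖ b) (hlt : f b < f a) {i j : ι} (hij : f i = f j) :
    b ≤ i ↔ b ≤ j := by
  have hle : ∀ {i j}, f i = f j → b ≤ i → b ≤ j := fun {i j} hij hi => by
    by_contra! hj
    exact ((hf hi).trans_lt (hlt.trans_le (hf (hab.le_of_lt hj)))).ne hij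
  exact ⟨hle hij, hle hij.symm⟩

section Derivative

variable {k : ℕ} {Θ H : Matrix (Fin k) (Fin k) ℝ} {u : Fin k → Fin k → ℝ}

theorem hasDerivAt_sum_apply_sortedEigs
    (horth : ∀ i j, u i ⬝ᵥ u j = if i = j then 1 else 0)
    (hdecomp : Θ = ∑ ℓ, sortedEigs Θ ℓ • vecMulVec (u ℓ) (u ℓ)) (hH : H.IsSymm)
    {φ : Fin k → ℝ → ℝ} (hφ : ∀ i, DifferentiableAt ℝ (φ i) (sortedEigs Θ i))
    (hφΘ : ∀ i j, sortedEigs Θ i = sortedEigs Θ j → φ i = φ j) :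
    HasDerivAt (fun t : ℝ => ∑ ℓ, φ ℓ (sortedEigs (Θ + t • H) ℓ))
      (∑ ℓ, deriv (φ ℓ) (sortedEigs Θ ℓ) * (u ℓ ⬝ᵥ H *ᵥ u ℓ)) 0 := by
  have hΘ : Θ.IsSymm := hdecomp ▸ isSymm_sum_smul_vecMulVec _ u
  have hline : ∀ t : ℝ, (Θ + t • H).IsHermitian := fun t => by
    simp [IsHermitian, conjTranspose_eq_transpose_of_trivial, hΘ.eq, hH.eq]
  choose v hv using fun t => exists_isEigenbasis_sortedEigs (hline t)
  obtain ⟨b, hb⟩ := exists_orthonormalBasis_of_dotProduct_eq_ite horth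
  have hbΘ : IsEigenbasis (toEuclideanCLM (𝕜 := ℝ) Θ) b (sortedEigs Θ) := fun i =>
    WithLp.ofLp_injective 2 <| by
      simpa [hb, ← hdecomp] using sum_smul_vecMulVec_mulVec horth (sortedEigs Θ) i
  have hderiv := IsEigenbasis.hasDerivAt_sum_apply_eigenvalue (u := b) (φ := φ)
    (H := toEuclideanCLM (𝕜 := ℝ) H) (μ := fun t => sortedEigs (Θ + t • H))
    (fun t => by simpa using hv t) (fun t => antitone_sortedEigs _)
    (by simpa using hbΘ) (by simpa using hφ) (by simpa using hφΘ)
  simpa [inner_toEuclideanCLM, hb, -toEuclideanCLM_toLp] using hderiv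

theorem stmt_15_general
    (horth : ∀ i j, u i ⬝ᵥ u j = if i = j then 1 else 0)
    (hdecomp : Θ = ∑ ℓ, sortedEigs Θ ℓ • vecMulVec (u ℓ) (u ℓ)) (hH : H.IsSymm)
    {p : Fin k → Prop} [DecidablePred p]
    (hp : ∀ i j, sortedEigs Θ i = sortedEigs Θ j → (p i ↔ p j))
    {f : ℝ → ℝ} (hf : ∀ i, p i → DifferentiableAt ℝ f (sortedEigs Θ i)) :
    HasDerivAt (fun t : ℝ => ∑ ℓ, if p ℓ then f (sortedEigs (Θ + t • H) ℓ) else 0)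
      (∑ ℓ, if p ℓ then deriv f (sortedEigs Θ ℓ) * (u ℓ ⬝ᵥ H *ᵥ u ℓ) else 0) 0 := by
  have hφ : ∀ i, DifferentiableAt ℝ (if p i then f else 0) (sortedEigs Θ i) := fun i => by
    split_ifs with hi
    exacts [hf i hi, differentiableAt_const 0]
  have hderiv := hasDerivAt_sum_apply_sortedEigs horth hdecomp hH hφ
    fun i j hij => by simp only [hp i j hij]
  simpa [ite_apply, apply_ite deriv, ite_mul] using hderiv

end Derivative

/-- Derivative of `Θ ↦ −Σ_{ℓ=k−s+1}^{k} log λ_ℓ(Θ)` at a symmetric positive definite `Θ̂`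
with `λ_{k−s}(Θ̂) > λ_{k−s+1}(Θ̂)`, along a symmetric direction `H`, expressed via a
spectral decomposition `Θ̂ = Σ_ℓ λ_ℓ(Θ̂)·u_ℓ·u_ℓᵀ` with orthonormal `u_ℓ`. -/
theorem stmt_15 {k s : ℕ} (hk : 2 ≤ k) (hs : 1 ≤ s) (hsk : s < k)
    (Θ : Matrix (Fin k) (Fin k) ℝ) (hΘ : Θ.PosDef)
    (hgap : sortedEigs Θ ⟨k - s, by omega⟩ < sortedEigs Θ ⟨k - s - 1, by omega⟩)
    (u : Fin k → Fin k → ℝ)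
    (horth : ∀ i j, dotProduct (u i) (u j) = if i = j then (1 : ℝ) else 0)
    (hdecomp : Θ = ∑ ℓ : Fin k, sortedEigs Θ ℓ • Matrix.vecMulVec (u ℓ) (u ℓ))
    (H : Matrix (Fin k) (Fin k) ℝ) (hH : H.IsSymm) :
    HasDerivAt
      (fun t : ℝ =>
        -(∑ ℓ : Fin k, if k - s ≤ (ℓ : ℕ) then Real.log (sortedEigs (Θ + t • H) ℓ) else 0))
      (-(∑ ℓ : Fin k,
          if k - s ≤ (ℓ : ℕ) then dotProduct (u ℓ) (H.mulVec (u ℓ)) / sortedEigs Θ ℓ else 0))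
      0 := by
  have hadj : k - s - 1 ⋖ k - s :=
    Nat.covBy_iff_add_one_eq.mpr (Nat.sub_add_cancel (Nat.sub_pos_of_lt hsk))
  have hcluster : ∀ i j, sortedEigs Θ i = sortedEigs Θ j → (k - s ≤ (i : ℕ) ↔ k - s ≤ (j : ℕ)) :=
    fun _ _ => le_iff_le_of_antitone_of_covBy (antitone_sortedEigs Θ) (Fin.covBy_iff.mpr hadj) hgap
  have hderiv := stmt_15_general horth hdecomp hH hcluster
    fun i _ => Real.differentiableAt_log (sortedEigs_pos hΘ i).ne'
  simpa only [Real.deriv_log, ← div_eq_inv_mul] using hderiv.fun_neg
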